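/- Every 2-connected chordal graph H on i+1 vertices (i ≥ 1) is isomorphic to a graph on vertex set {0,1,...,i} in which: 0 and 1 are adjacent; for every j ∈ {1,...,i−1}, vertex j+1 has at least 2 neighbours in {0,...,j}; and for every j ∈ {1,...,i−1}, the neighbours of j+1 in {0,...,j} form a clique. -/

import Mathlib

/-!
A non-complete finite chordal graph has connected vertex sets with vertices outside their closed
neighbourhood; let `A` be a maximal one. By maximality every neighbour of `A` is adjacent to every
vertex outside the closed neighbourhood of `A`. Two neighbours of `A` with a common neighbour `b`
outside that closed neighbourhood are adjacent, since otherwise `b` and a shortest path between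
them through `A` form an induced cycle. Hence a vertex that is simplicial in the graph induced
outside the closed neighbourhood is simplicial in the whole graph. So every nonempty finite chordal
graph has a simplicial vertex, and removing such vertices one by one yields an ordering in which the
earlier neighbours of each vertex form a clique.

Deleting a simplicial vertex does not disconnect a graph, because the vertex can be folded onto any
of its neighbours. Therefore the initial segments of the ordering are connected, and remain so
after the deletion of any vertex `u`. So every vertex but the first has an earlier neighbour `u`,
and, unless it is the second, another one once `u` is deleted.
-/

open SimpleGraph

section ChordalGraphs

variable {V W : Type*} {G : SimpleGraph V}

/-- A chordal graph: one without induced cycles of length at least four. -/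
def IsChordal (G : SimpleGraph V) : Prop :=
  ∀ m : ℕ, 4 ≤ m → IsEmpty (cycleGraph m ↪g G)

/-- A simplicial vertex: one whose neighbours form a clique. -/
def IsSimplicial (G : SimpleGraph V) (v : V) : Prop :=
  G.IsClique (G.neighborSet v)

/-- A perfect elimination order, read backwards: the vertices are eliminated from the largest down,
so it is the smaller neighbours of each vertex that form a clique. -/
def IsPerfectEliminationOrder [LinearOrder V] (G : SimpleGraph V) : Prop :=
  ∀ k, G.IsClique (Set.Iio k ∩ G.neighborSet k)

/-- The vertices outside the closed neighbourhood of `A`. -/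
def undominated (G : SimpleGraph V) (A : Set V) : Set V :=
  {b | b ∉ A ∧ ∀ a ∈ A, ¬ G.Adj a b}

theorem dist_getVert_of_length_eq_dist {u v : V} {p : G.Walk u v} (hp : p.length = G.dist u v)
    {k : ℕ} (hk : k ≤ p.length) : G.dist u (p.getVert k) = k := by
  rw [← length_eq_dist_of_subwalk hp (p.isSubwalk_take k), Walk.take_length, min_eq_left hk]

theorem exists_pathGraph_embedding_of_reachable {u v : V} (h : G.Reachable u v) :
    ∃ f : pathGraph (G.dist u v + 1) ↪g G, f 0 = u ∧ f (Fin.last _) = v := by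
  obtain ⟨p, hp⟩ := h.exists_walk_length_eq_dist
  have hdist (k : Fin (G.dist u v + 1)) : G.dist u (p.getVert k) = k :=
    dist_getVert_of_length_eq_dist hp (by lia)
  have hinj : Function.Injective fun k : Fin (G.dist u v + 1) ↦ p.getVert k :=
    fun k l hkl ↦ Fin.ext (by rw [← hdist k, ← hdist l]; exact congrArg _ hkl)
  have hadj (k l : Fin (G.dist u v + 1)) :
      G.Adj (p.getVert k) (p.getVert l) ↔ (pathGraph (G.dist u v + 1)).Adj k l := by
    rw [pathGraph_adj]
    refine ⟨fun hkl ↦ ?_, ?_⟩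
    · have hne : (k : ℕ) ≠ l := fun h ↦ hkl.ne (congrArg p.getVert h)
      have := hkl.diff_dist_adj (u := u)
      rw [hdist, hdist] at this
      lia
    · rintro (h | h)
      · rw [← h]
        exact p.adj_getVert_succ (by lia)
      · rw [← h]
        exact (p.adj_getVert_succ (by lia)).symm
  have hlast : p.getVert (G.dist u v) = v := by rw [← hp, p.getVert_length]
  exact ⟨⟨⟨_, hinj⟩, hadj _ _⟩, p.getVert_zero, hlast⟩

theorem cycleGraph_adj_castSucc {n : ℕ} {k l : Fin (n + 1)} :
    (cycleGraph (n + 2)).Adj k.castSucc l.castSucc ↔ (pathGraph (n + 1)).Adj k l := by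
  rw [cycleGraph_adj', pathGraph_adj]
  rcases lt_trichotomy k l with h | rfl | h
  · rw [Fin.coe_sub_iff_lt.2 (by simpa using h), Fin.coe_sub_iff_le.2 (by simpa using h.le)]
    simp only [Fin.val_castSucc]
    lia
  · simp
  · rw [Fin.coe_sub_iff_le.2 (by simpa using h.le), Fin.coe_sub_iff_lt.2 (by simpa using h)]
    simp only [Fin.val_castSucc]
    lia

theorem cycleGraph_adj_last_castSucc {n : ℕ} {k : Fin (n + 1)} :
    (cycleGraph (n + 2)).Adj (Fin.last _) k.castSucc ↔ k = 0 ∨ k = Fin.last n := by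
  rw [cycleGraph_adj', Fin.coe_sub_iff_le.2 (Fin.le_last _),
    Fin.coe_sub_iff_lt.2 (Fin.castSucc_lt_last k)]
  simp only [Fin.val_castSucc, Fin.val_last, Fin.ext_iff, Fin.val_zero]
  lia

theorem nonempty_cycleGraph_embedding_of_pathGraph {n : ℕ} (f : pathGraph (n + 1) ↪g G) {u : V}
    (hu : ∀ k, u ≠ f k) (hadj : ∀ k, G.Adj u (f k) ↔ k = 0 ∨ k = Fin.last n) :
    Nonempty (cycleGraph (n + 2) ↪g G) := by
  refine ⟨⟨⟨Fin.snoc (α := fun _ ↦ V) f u, ?_⟩, fun {k l} ↦ ?_⟩⟩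
  · rw [Fin.snoc_injective_iff]
    exact ⟨f.injective, fun ⟨k, hk⟩ ↦ hu k hk.symm⟩
  · cases k using Fin.lastCases <;> cases l using Fin.lastCases
    · simp
    · simp [hadj, cycleGraph_adj_last_castSucc]
    · simp [hadj, cycleGraph_adj_last_castSucc, adj_comm _ _ (Fin.last _), adj_comm _ _ u]
    · simp [cycleGraph_adj_castSucc]

theorem IsChordal.of_embedding {H : SimpleGraph W} (hG : IsChordal G) (f : H ↪g G) :
    IsChordal H :=
  fun m hm ↦ ⟨fun c ↦ (hG m hm).false (c.trans f)⟩

theorem IsChordal.adj_of_inter_neighborSet_eq_pair (hG : IsChordal G) {s : Set V} {u x y : V}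
    (hs : (G.induce s).Preconnected) (hu : u ∉ s) (hN : s ∩ G.neighborSet u = {x, y})
    (hxy : x ≠ y) : G.Adj x y := by
  by_contra hnadj
  have hx : x ∈ s := (hN.ge (by simp) : x ∈ s ∩ G.neighborSet u).1
  have hy : y ∈ s := (hN.ge (by simp) : y ∈ s ∩ G.neighborSet u).1
  have hreach : (G.induce s).Reachable ⟨x, hx⟩ ⟨y, hy⟩ := hs _ _
  have hlen := hreach.one_lt_dist_of_ne_of_not_adj (by simpa using hxy) hnadj
  obtain ⟨f, hf₀, hf₁⟩ := exists_pathGraph_embedding_of_reachable hreach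
  have hadj (k) : G.Adj u (f k) ↔ k = 0 ∨ k = Fin.last _ := by
    have : G.Adj u (f k) ↔ (f k : V) ∈ s ∩ G.neighborSet u := by simp
    rw [this, hN, ← f.injective.eq_iff, ← f.injective.eq_iff, hf₀, hf₁]
    simp [Subtype.ext_iff]
  obtain ⟨c⟩ := nonempty_cycleGraph_embedding_of_pathGraph (f.trans (Embedding.induce s))
    (fun k (hk : u = f k) ↦ hu (hk ▸ (f k).2)) hadj
  exact (hG _ (by lia)).false c

theorem connected_induce_insert {s : Set V} {v w : V} (hs : (G.induce s).Preconnected)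
    (hv : v ∈ s) (hvw : G.Adj v w) : (G.induce (insert w s)).Connected := by
  rw [← Set.union_singleton]
  exact connected_induce_union hs .of_subsingleton hv rfl hvw

theorem IsChordal.adj_of_adj_undominated (hG : IsChordal G) {A : Set V}
    (hA : (G.induce A).Preconnected) {b x y : V} (hb : b ∈ undominated G A)
    (hx : ∃ a ∈ A, G.Adj a x) (hy : ∃ a ∈ A, G.Adj a y) (hbx : G.Adj b x) (hby : G.Adj b y)
    (hxy : x ≠ y) : G.Adj x y := by
  obtain ⟨a, ha, hax⟩ := hx
  obtain ⟨a', ha', hay⟩ := hy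
  have hconn : (G.induce (insert x (insert y A))).Preconnected :=
    (connected_induce_insert (connected_induce_insert hA ha' hay).preconnected
      (Set.mem_insert_of_mem y ha) hax).preconnected
  refine hG.adj_of_inter_neighborSet_eq_pair hconn (u := b) ?_ ?_ hxy
  · simp [hbx.ne, hby.ne, hb.1]
  · ext z
    have : z ∈ A → ¬ G.Adj b z := fun hz h ↦ hb.2 z hz h.symm
    simp only [Set.mem_inter_iff, Set.mem_insert_iff, mem_neighborSet, Set.mem_singleton_iff]
    grind

theorem adj_of_maximal_connected_undominated_nonempty {A : Set V}
    (hA : Maximal (fun A ↦ (G.induce A).Connected ∧ (undominated G A).Nonempty) A) {a x b : V}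
    (ha : a ∈ A) (hx : x ∉ A) (hax : G.Adj a x) (hb : b ∈ undominated G A) : G.Adj x b := by
  by_contra hxb
  have hconn := connected_induce_insert hA.prop.1.preconnected ha hax
  have hb' : b ∈ undominated G (insert x A) := by
    refine ⟨?_, by simpa [hxb] using hb.2⟩
    rintro (rfl | hbA)
    · exact hb.2 a ha hax
    · exact hb.1 hbA
  exact hx (hA.le_of_ge ⟨hconn, b, hb'⟩ (Set.subset_insert x A) (Set.mem_insert x A))

theorem IsChordal.isSimplicial_of_isSimplicial_induce_undominated (hG : IsChordal G) {A : Set V}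
    (hA : Maximal (fun A ↦ (G.induce A).Connected ∧ (undominated G A).Nonempty) A)
    {v : undominated G A} (hv : IsSimplicial (G.induce (undominated G A)) v) :
    IsSimplicial G v := by
  have hnbr {x : V} (hvx : G.Adj v x) :
      x ∈ undominated G A ∨ x ∉ A ∧ ∃ a ∈ A, G.Adj a x := by
    have : x ∉ A := fun hx ↦ v.2.2 x hx hvx.symm
    by_cases h : ∃ a ∈ A, G.Adj a x
    · exact .inr ⟨this, h⟩
    · exact .inl ⟨this, by simpa using h⟩
  intro x hvx y hvy hxy
  rcases hnbr hvx with hx | ⟨hxA, a, ha, hax⟩ <;> rcases hnbr hvy with hy | ⟨hyA, a', ha', hay⟩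
  · exact hv (x := ⟨x, hx⟩) hvx (y := ⟨y, hy⟩) hvy (by simpa using hxy)
  · exact (adj_of_maximal_connected_undominated_nonempty hA ha' hyA hay hx).symm
  · exact adj_of_maximal_connected_undominated_nonempty hA ha hxA hax hy
  · exact hG.adj_of_adj_undominated hA.prop.1.preconnected v.2 ⟨a, ha, hax⟩ ⟨a', ha', hay⟩
      hvx hvy hxy

theorem IsChordal.exists_isSimplicial [Finite V] [Nonempty V] (hG : IsChordal G) :
    ∃ v, IsSimplicial G v := by
  induction hn : Nat.card V using Nat.strong_induction_on generalizing V with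
  | _ n ih =>
  subst hn
  by_cases hcomplete : ∀ x y, x ≠ y → G.Adj x y
  · exact ⟨Classical.arbitrary V, fun x _ y _ ↦ hcomplete x y⟩
  push Not at hcomplete
  obtain ⟨x, y, hxy, hnadj⟩ := hcomplete
  have hne : {A | (G.induce A).Connected ∧ (undominated G A).Nonempty}.Nonempty :=
    ⟨{x}, ⟨.of_subsingleton⟩, y, by simp [undominated, hxy.symm, hnadj]⟩
  obtain ⟨A, hA⟩ := (Set.toFinite _).exists_maximal hne
  obtain ⟨⟨a, ha⟩⟩ := hA.prop.1.nonempty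
  have hcard : Nat.card (undominated G A) < Nat.card V :=
    Finite.card_subtype_lt (x := a) fun h ↦ h.1 ha
  have : Nonempty (undominated G A) := hA.prop.2.to_subtype
  obtain ⟨v, hv⟩ := ih _ hcard (hG.of_embedding (Embedding.induce _)) rfl
  exact ⟨v, hG.isSimplicial_of_isSimplicial_induce_undominated hA hv⟩

theorem IsSimplicial.isPerfectEliminationOrder_comap {n : ℕ} {v : V} (hv : IsSimplicial G v)
    {e : Fin (n + 1) ≃ V} (he : e (Fin.last n) = v)
    (h : IsPerfectEliminationOrder (G.comap (e ∘ Fin.castSucc))) :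
    IsPerfectEliminationOrder (G.comap e) := by
  intro k i hi j hj hij
  cases k using Fin.lastCases with
  | last => exact hv (he ▸ hi.2) (he ▸ hj.2) (e.injective.ne hij)
  | cast k =>
    obtain ⟨i, rfl⟩ := Fin.exists_castSucc_eq.mpr (hi.1.trans (Fin.castSucc_lt_last k)).ne
    obtain ⟨j, rfl⟩ := Fin.exists_castSucc_eq.mpr (hj.1.trans (Fin.castSucc_lt_last k)).ne
    exact h k hi hj (by simpa using hij)

theorem IsChordal.exists_isPerfectEliminationOrder [Finite V] (hG : IsChordal G) {n : ℕ}
    (hn : Nat.card V = n) : ∃ e : Fin n ≃ V, IsPerfectEliminationOrder (G.comap e) := by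
  induction n generalizing V with
  | zero => exact ⟨(Finite.equivFinOfCardEq hn).symm, fun k ↦ k.elim0⟩
  | succ n ih =>
    classical
    have : Nonempty V := (Nat.card_pos_iff.mp (by lia)).1
    obtain ⟨v, hv⟩ := hG.exists_isSimplicial
    have hcard : Nat.card {w // w ≠ v} = n := by
      have := Finite.card_option (α := {w // w ≠ v})
      rw [Nat.card_congr (Equiv.optionSubtypeNe v)] at this
      lia
    obtain ⟨e, he⟩ := ih (hG.of_embedding (Embedding.induce {w | w ≠ v})) hcard
    let E : Fin (n + 1) ≃ V :=
      finSuccEquivLast.trans (e.optionCongr.trans (Equiv.optionSubtypeNe v))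
    have hlast : E (Fin.last n) = v := by simp [E, Equiv.optionSubtypeNe_none v]
    have hcastSucc : E ∘ Fin.castSucc = Subtype.val ∘ e := by
      ext k
      simp only [E, Function.comp_apply, Equiv.trans_apply, finSuccEquivLast_castSucc,
        Equiv.optionCongr_apply, Option.map_some]
      rfl
    exact ⟨E, hv.isPerfectEliminationOrder_comap hlast (hcastSucc ▸ he)⟩

theorem preconnected_induce_sdiff_singleton_of_dominated {s : Set V} {v w : V}
    (hs : (G.induce s).Preconnected) (hw : w ∈ s \ {v})
    (hdom : ∀ x ∈ s, G.Adj v x → x = w ∨ G.Adj w x) : (G.induce (s \ {v})).Preconnected := by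
  classical
  -- Folding `v` onto `w` sends edges to edges or to single vertices.
  let fold (x : s) : ↥(s \ {v}) := if hx : (x : V) = v then ⟨w, hw⟩ else ⟨x, x.2, hx⟩
  have hfold (x : ↥(s \ {v})) : fold ⟨x, x.2.1⟩ = x := dif_neg x.2.2
  have hfold_adj {x y : s} (hxy : G.Adj x y) :
      (G.induce (s \ {v})).Reachable (fold x) (fold y) := by
    suffices fold x = fold y ∨ G.Adj (fold x) (fold y) from
      this.elim (fun h ↦ h ▸ .rfl) fun h ↦ Adj.reachable h
    have := hdom x x.2
    have := hdom y y.2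
    grind [adj_comm, G.loopless]
  have hfold_reachable {x y : s} (h : (G.induce s).Reachable x y) :
      (G.induce (s \ {v})).Reachable (fold x) (fold y) := by
    obtain ⟨p⟩ := h
    induction p with
    | nil => rfl
    | cons hadj _ ih => exact (hfold_adj hadj).trans ih
  intro x y
  rw [← hfold x, ← hfold y]
  exact hfold_reachable (hs _ _)

theorem preconnected_induce_sdiff_singleton_of_isClique {s : Set V} {v : V}
    (hs : (G.induce s).Preconnected) (hv : G.IsClique (s ∩ G.neighborSet v)) :
    (G.induce (s \ {v})).Preconnected := by
  intro x y
  suffices ∃ w ∈ s \ {v}, ∀ z ∈ s, G.Adj v z → z = w ∨ G.Adj w z by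
    obtain ⟨w, hw, hdom⟩ := this
    exact preconnected_induce_sdiff_singleton_of_dominated hs hw hdom x y
  by_cases hN : ∃ w ∈ s, G.Adj v w
  · obtain ⟨w, hw, hvw⟩ := hN
    refine ⟨w, ⟨hw, hvw.ne'⟩, fun z hz hvz ↦ ?_⟩
    exact or_iff_not_imp_left.mpr fun hzw ↦ hv ⟨hw, hvw⟩ ⟨hz, hvz⟩ (Ne.symm hzw)
  · exact ⟨x, x.2, fun z hz hvz ↦ (hN ⟨z, hz, hvz⟩).elim⟩

theorem IsPerfectEliminationOrder.preconnected_induce_inter_Iic [LinearOrder V] [SuccOrder V]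
    [WellFoundedGT V] (hG : IsPerfectEliminationOrder G) {s : Set V}
    (hs : (G.induce s).Preconnected) (k : V) : (G.induce (s ∩ Set.Iic k)).Preconnected := by
  induction k using WellFoundedGT.induction with
  | _ k ih =>
  by_cases hk : IsMax k
  · rwa [(isTop_iff_isMax.mpr hk).Iic_eq, Set.inter_univ]
  · have hlt := Order.lt_succ_of_not_isMax hk
    have hIic : s ∩ Set.Iic k = (s ∩ Set.Iic (Order.succ k)) \ {Order.succ k} := by
      rw [Order.Iic_succ]
      grind
    have hclique : G.IsClique (s ∩ Set.Iic (Order.succ k) ∩ G.neighborSet (Order.succ k)) :=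
      (hG (Order.succ k)).subset <| by
        rintro x ⟨⟨-, hx⟩, hadj⟩
        exact ⟨lt_of_le_of_ne hx hadj.ne', hadj⟩
    rw [hIic]
    exact preconnected_induce_sdiff_singleton_of_isClique (ih _ hlt) hclique

theorem exists_mem_adj {s : Set V} (hs : (G.induce s).Preconnected) (hs' : s.Nontrivial) {v : V}
    (hv : v ∈ s) : ∃ u ∈ s, G.Adj v u := by
  have := hs'.coe_sort
  obtain ⟨u, hu⟩ := hs.exists_adj_of_nontrivial ⟨v, hv⟩
  exact ⟨u, u.2, hu⟩

theorem IsPerfectEliminationOrder.exists_mem_lt_adj [LinearOrder V] [SuccOrder V]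
    [WellFoundedGT V] (hG : IsPerfectEliminationOrder G) {s : Set V}
    (hs : (G.induce s).Preconnected) {j k : V} (hj : j ∈ s) (hk : k ∈ s) (hjk : j < k) :
    ∃ u ∈ s, u < k ∧ G.Adj k u := by
  obtain ⟨u, ⟨hu, huk⟩, hadj⟩ := exists_mem_adj (hG.preconnected_induce_inter_Iic hs k)
    (Set.nontrivial_of_mem_mem_ne ⟨hj, hjk.le⟩ ⟨hk, le_rfl⟩ hjk.ne) ⟨hk, Set.mem_Iic.mpr le_rfl⟩
  exact ⟨u, hu, lt_of_le_of_ne huk hadj.ne', hadj⟩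

theorem IsPerfectEliminationOrder.exists_lt_adj [LinearOrder V] [SuccOrder V] [WellFoundedGT V]
    (hG : IsPerfectEliminationOrder G) (hconn : G.Preconnected) {j k : V} (hjk : j < k) :
    ∃ u < k, G.Adj k u := by
  obtain ⟨u, -, hu⟩ := hG.exists_mem_lt_adj ((induceUnivIso G).preconnected_iff.mpr hconn)
    (Set.mem_univ j) (Set.mem_univ k) hjk
  exact ⟨u, hu⟩

theorem IsPerfectEliminationOrder.two_le_ncard [LinearOrder V] [SuccOrder V] [Finite V]
    (hG : IsPerfectEliminationOrder G) (hconn : G.Preconnected)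
    (hdel : ∀ v, (G.induce {v}ᶜ).Preconnected) {k : V} (hk : (Set.Iio k).Nontrivial) :
    2 ≤ (Set.Iio k ∩ G.neighborSet k).ncard := by
  obtain ⟨j, hj⟩ := hk.nonempty
  obtain ⟨u, huk, hu⟩ := hG.exists_lt_adj hconn hj
  obtain ⟨i, hi, hiu⟩ := hk.exists_ne u
  obtain ⟨w, hwu, hwk, hw⟩ := hG.exists_mem_lt_adj (hdel u) hiu huk.ne' hi
  rw [← Set.ncard_pair hwu]
  exact Set.ncard_le_ncard (Set.pair_subset ⟨hwk, hw⟩ ⟨huk, hu⟩) (Set.toFinite _)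

theorem coe_deleteVerts_top_preconnected_iff {s : Set V} :
    ((⊤ : G.Subgraph).deleteVerts s).coe.Preconnected ↔ (G.induce sᶜ).Preconnected := by
  rw [Set.compl_eq_univ_sdiff, induce_eq_coe_induce_top]
  exact Iff.rfl

theorem preconnected_induce_compl_singleton_of_iso {H : SimpleGraph W} (φ : G ≃g H) {v : V}
    (h : (H.induce {φ v}ᶜ).Preconnected) : (G.induce {v}ᶜ).Preconnected := by
  have hφ : Set.BijOn φ {v}ᶜ {φ v}ᶜ := (Set.bijOn_singleton.mpr rfl).compl φ.bijective
  exact (φ.induce hφ).preconnected_iff.mpr h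

end ChordalGraphs

/-- Every 2-connected chordal graph `H` on `i + 1` vertices (`i ≥ 1`) is isomorphic
to a graph on vertex set `{0, 1, ..., i}` in which: `0` and `1` are adjacent; for
every `j ∈ {1, ..., i-1}`, vertex `j + 1` has at least 2 neighbours in `{0, ..., j}`;
and these neighbours form a clique. -/
theorem stmt11 {V : Type*} [Fintype V] (i : ℕ) (hi : 1 ≤ i)
    (H : SimpleGraph V) (hcard : Fintype.card V = i + 1)
    (hconn : H.Connected) (hcard3 : 3 ≤ Fintype.card V)
    (hdel : ∀ v : V, ((⊤ : H.Subgraph).deleteVerts {v}).coe.Connected)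
    (hchordal : ∀ m : ℕ, 4 ≤ m → IsEmpty (SimpleGraph.cycleGraph m ↪g H)) :
    ∃ G : SimpleGraph (Fin (i + 1)),
      G.Adj ⟨0, by omega⟩ ⟨1, by omega⟩ ∧
      (∀ j : ℕ, ∀ _hj : 1 ≤ j ∧ j ≤ i - 1,
        2 ≤ {v : Fin (i + 1) | v.val ≤ j ∧ G.Adj v ⟨j + 1, by omega⟩}.ncard) ∧
      (∀ j : ℕ, ∀ _hj : 1 ≤ j ∧ j ≤ i - 1,
        G.IsClique {v : Fin (i + 1) | v.val ≤ j ∧ G.Adj v ⟨j + 1, by omega⟩}) ∧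
      Nonempty (H ≃g G) := by
  obtain ⟨e, he⟩ := IsChordal.exists_isPerfectEliminationOrder hchordal
    (Nat.card_eq_fintype_card.trans hcard)
  let G := H.comap e
  let φ : G ≃g H := Iso.comap e H
  have hGconn : G.Preconnected := φ.preconnected_iff.mpr hconn.preconnected
  have hGdel (v) : (G.induce {v}ᶜ).Preconnected :=
    preconnected_induce_compl_singleton_of_iso φ
      (coe_deleteVerts_top_preconnected_iff.mp (hdel (φ v)).preconnected)
  have hset (j : ℕ) (hj : j + 1 < i + 1) : {v : Fin (i + 1) | v.val ≤ j ∧ G.Adj v ⟨j + 1, hj⟩} =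
      Set.Iio ⟨j + 1, hj⟩ ∩ G.neighborSet ⟨j + 1, hj⟩ := by
    ext v
    simp [Fin.lt_def, adj_comm]
  refine ⟨G, ?_, fun j hj ↦ ?_, fun j hj ↦ ?_, ⟨φ.symm⟩⟩
  · obtain ⟨u, hu, hadj⟩ := he.exists_lt_adj hGconn
      (show (⟨0, by lia⟩ : Fin (i + 1)) < ⟨1, by lia⟩ from Nat.zero_lt_one)
    obtain rfl : u = ⟨0, by lia⟩ := Fin.ext (Nat.lt_one_iff.mp hu)
    exact hadj.symm
  · rw [hset]
    exact he.two_le_ncard hGconn hGdel ⟨⟨0, by lia⟩, Nat.succ_pos j, ⟨1, by lia⟩,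
      Nat.succ_lt_succ hj.1, by simp⟩
  · rw [hset]
    exact he _
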